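/- Let K be a nonempty finite index set, let T : ℝ → ℝ be differentiable with T(t) > 0 for all t, and for each k ∈ K let Ψ_k : ℝ → ℝ be differentiable. Suppose the functions p_k(t) := exp(Ψ_k(t)/T(t)) satisfy the normalization Σ_{k∈K} p_k(t) = 1 for all t. Define the ensemble averages ⟨Ψ⟩(t) := Σ_k p_k(t) Ψ_k(t) and ⟨Ψ'⟩(t) := Σ_k p_k(t) Ψ_k'(t). Then for every t with ⟨Ψ⟩(t) ≠ 0, the temperature change obeys T'(t) = T(t) · ⟨Ψ'⟩(t) / ⟨Ψ⟩(t). -/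

import Mathlib

open Finset

/-- Theorem 1 of the paper: for internal-equilibrium probabilities
`p_k(t) = exp(Ψ_k(t)/T(t))` with normalization `∑_k p_k(t) = 1`, the temperature change
obeys `dT = T ⟨dΨ⟩/⟨Ψ⟩` whenever `⟨Ψ⟩ ≠ 0`. -/
theorem temperature_change_of_normalized_exponential_probabilities
    {K : Type*} [Fintype K] [Nonempty K]
    (T : ℝ → ℝ) (hT : Differentiable ℝ T) (hTpos : ∀ t, 0 < T t)
    (Ψ : K → ℝ → ℝ) (hΨ : ∀ k, Differentiable ℝ (Ψ k))
    (hnorm : ∀ t, ∑ k : K, Real.exp (Ψ k t / T t) = 1)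
    (t : ℝ)
    (havg : (∑ k : K, Real.exp (Ψ k t / T t) * Ψ k t) ≠ 0) :
    deriv T t =
      T t * (∑ k : K, Real.exp (Ψ k t / T t) * deriv (Ψ k) t) /
        (∑ k : K, Real.exp (Ψ k t / T t) * Ψ k t) := by
  have hne : T t ≠ 0 := (hTpos t).ne'
  have h1 : HasDerivAt (fun s => ∑ k : K, Real.exp (Ψ k s / T s))
      (∑ k : K, Real.exp (Ψ k t / T t) *
        ((deriv (Ψ k) t * T t - Ψ k t * deriv T t) / T t ^ 2)) t :=
    HasDerivAt.fun_sum fun k _ =>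
      (((hΨ k t).hasDerivAt).fun_div (hT t).hasDerivAt hne).exp
  have h2 : HasDerivAt (fun s => ∑ k : K, Real.exp (Ψ k s / T s)) 0 t := by
    simp only [hnorm]
    exact hasDerivAt_const t 1
  have h3 := h1.unique h2
  have h4 : ∑ k : K, Real.exp (Ψ k t / T t) *
        ((deriv (Ψ k) t * T t - Ψ k t * deriv T t) / T t ^ 2) =
      (T t * (∑ k : K, Real.exp (Ψ k t / T t) * deriv (Ψ k) t) -
        deriv T t * (∑ k : K, Real.exp (Ψ k t / T t) * Ψ k t)) / T t ^ 2 := by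
    rw [Finset.mul_sum, Finset.mul_sum, ← Finset.sum_sub_distrib, Finset.sum_div]
    refine Finset.sum_congr rfl fun k _ => ?_
    ring
  rw [h4, div_eq_zero_iff] at h3
  rw [eq_div_iff havg]
  rcases h3 with h | h
  · linarith
  · exact absurd h (pow_ne_zero 2 hne)
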